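/- In the setting where Δ⃗_{n⃗} ⊆ Δ⃗ are vectors of pairwise disjoint closed intervals and ℋ_{n⃗} := ℋ_{Δ⃗_{n⃗},Δ⃗}, define for u⃗ ∈ C(Δ⃗) the vector of constants u⃗_{n⃗,∞} := ( (H_{Δ_{n⃗,1}} u_1)(∞), …, (H_{Δ_{n⃗,d}} u_d)(∞) ) and the rank-≤d operator 𝒦_{n⃗} u⃗ := (I − (I − ℋ_{n⃗})^{−1}) u⃗_{n⃗,∞}. Then, with 𝔅 either C(Δ⃗) or C¹(Δ⃗): I − 𝒦_{n⃗} is an invertible linear operator of 𝔅 onto itself, with (I − 𝒦_{n⃗})^{−1} u⃗ = u⃗ − ℋ_{n⃗} u⃗_{n⃗,∞}, and there is a constant C independent of n⃗ such that ‖(I − 𝒦_{n⃗})^{−1}‖_𝔅 ≤ C. -/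

import Mathlib

open MeasureTheory Set Filter Topology Polynomial

noncomputable section

/-- The arcsine distribution `dω_[a,b](x) = dx/(π √((x−a)(b−x)))` on `[a,b]`. -/
def arcsineMeasure (a b : ℝ) : Measure ℝ :=
  (volume.restrict (Set.Icc a b)).withDensity
    fun x => ENNReal.ofReal (1 / (Real.pi * Real.sqrt ((x - a) * (b - x))))

/-- The branch of `√((z−a)(z−b))` holomorphic off `[a,b]` with `w(z) = z + O(1)` at `∞`. -/
def wBranch (a b : ℝ) (z : ℂ) : ℂ :=
  (z - a) * Complex.exp ((1 / 2 : ℂ) * Complex.log ((z - b) / (z - a)))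

/-- Cauchy transform `∫ u(x)/(z−x) dω_[a,b](x)`. -/
def cauchyT (a b : ℝ) (u : ℝ → ℝ) (z : ℂ) : ℂ :=
  ∫ x, (u x : ℂ) / (z - (x : ℂ)) ∂(arcsineMeasure a b)

/-- `H_Δ u`, the harmonic extension of `u` off `Δ = [a,b]`. -/
def harmExt (a b : ℝ) (u : ℝ → ℝ) (z : ℂ) : ℝ :=
  (wBranch a b z * cauchyT a b u z).re

/-- The outer function `Ω_Δ(f,z) := exp( w_Δ(z) ∫ log f(x)/(z−x) dω_Δ(x) )`. -/
def OmegaFun (a b : ℝ) (f : ℝ → ℝ) (z : ℂ) : ℂ :=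
  Complex.exp (wBranch a b z * cauchyT a b (fun x => Real.log (f x)) z)

/-- The value of `Ω_Δ(f,·)` at infinity: `exp( ∫ log f dω_Δ )`. -/
def OmegaInf (a b : ℝ) (f : ℝ → ℝ) : ℝ :=
  Real.exp (∫ x, Real.log (f x) ∂(arcsineMeasure a b))

/-- Radon–Nikodym derivative `μ′` of `μ` with respect to Lebesgue measure. -/
def lebDeriv (μ : Measure ℝ) (x : ℝ) : ℝ := (μ.rnDeriv volume x).toReal

/-- `v_Δ(x) = π μ′(x) √((x−a)(b−x))`, the density of `μ|_Δ` w.r.t. the arcsine law. -/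
def vDens (μ : Measure ℝ) (a b : ℝ) (x : ℝ) : ℝ :=
  Real.pi * lebDeriv μ x * Real.sqrt ((x - a) * (b - x))

/-- Szegő function `G(e^h μ|_[a,b], z)`. -/
def szegoG (μ : Measure ℝ) (a b : ℝ) (h : ℝ → ℝ) (z : ℂ) : ℂ :=
  OmegaFun a b (fun x => Real.sqrt (Real.exp (h x) * vDens μ a b x)) z

/-- Szegő function `G(e^h μ|_[a,b], ·)` at infinity. -/
def szegoGInf (μ : Measure ℝ) (a b : ℝ) (h : ℝ → ℝ) : ℝ :=
  OmegaInf a b fun x => Real.sqrt (Real.exp (h x) * vDens μ a b x)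

/-- Support of a measure on `ℝ`. -/
def msupp (μ : Measure ℝ) : Set ℝ := {x | ∀ ε > 0, 0 < μ (Metric.ball x ε)}

def suppInf (μ : Measure ℝ) : ℝ := sInf (msupp μ)
def suppSup (μ : Measure ℝ) : ℝ := sSup (msupp μ)

/-- `Δ(μ)`, the convex hull of the support of `μ`. -/
def convHullSupp (μ : Measure ℝ) : Set ℝ := Set.Icc (suppInf μ) (suppSup μ)

/-- Logarithmic potential `V^ω(x) = −∫ log|x−t| dω(t)`. -/
def logPot (ω : Measure ℝ) (x : ℝ) : ℝ := -∫ t, Real.log |x - t| ∂ω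

/-- The Szegő condition `μ ∈ Sz([a,b])`. -/
def SzCond (μ : Measure ℝ) (a b : ℝ) : Prop :=
  Integrable (fun x => Real.log (lebDeriv μ x)) (arcsineMeasure a b)

/-- The increasing affine map of `[a,b]` onto `[c,d]`. -/
def affIcc (a b c d : ℝ) (x : ℝ) : ℝ := c + ((d - c) / (b - a)) * (x - a)

/-- The uniform Szegő condition `μ ∈ USz([a,b])`. -/
def USzCond (μ : Measure ℝ) (a b : ℝ) : Prop :=
  SzCond μ a b ∧
  ∀ A B : ℕ → ℝ, (∀ n, A n < B n) → (∀ n, Set.Icc (A n) (B n) ⊆ convHullSupp μ) →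
    Tendsto A atTop (𝓝 a) → Tendsto B atTop (𝓝 b) →
    (∀ᶠ n in atTop, SzCond μ (A n) (B n)) ∧
    Tendsto (fun n => ∫ x,
        |Real.log (lebDeriv μ x) - Real.log (lebDeriv μ (affIcc a b (A n) (B n) x))|
          ∂(arcsineMeasure a b)) atTop (𝓝 0)

/-- `P` is the `n`-th monic orthogonal polynomial with respect to `ν`. -/
def IsMonicOP (ν : Measure ℝ) (n : ℕ) (P : Polynomial ℝ) : Prop :=
  P.Monic ∧ P.natDegree = n ∧ ∀ k < n, ∫ x, x ^ k * P.eval x ∂ν = 0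

/-- The weighted measure `e^θ μ`. -/
def expWt (μ : Measure ℝ) (θ : ℝ → ℝ) : Measure ℝ :=
  μ.withDensity fun x => ENNReal.ofReal (Real.exp (θ x))

/-- An Angelesco system of `d` measures, with `Δ(μ_i) = [lo i, hi i]`. -/
structure Angelesco (d : ℕ) (μ : Fin d → Measure ℝ) (lo hi : Fin d → ℝ) : Prop where
  two_le : 2 ≤ d
  bounded : ∀ i, Bornology.IsBounded (msupp (μ i))
  infinite : ∀ i, (msupp (μ i)).Infinite
  lo_eq : ∀ i, lo i = suppInf (μ i)
  hi_eq : ∀ i, hi i = suppSup (μ i)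
  sep : ∀ i j, i < j → hi i < lo j

/-- The vector equilibrium measure `(ω_1,…,ω_d)` with parameter `c`,
with `supp ω_i = [A i, B i] ⊆ [lo i, hi i]` and masses `c i`. -/
structure VecEquil (d : ℕ) (lo hi : Fin d → ℝ) (c : Fin d → ℝ)
    (ω : Fin d → Measure ℝ) (A B : Fin d → ℝ) : Prop where
  endpoints : ∀ i, lo i ≤ A i ∧ A i < B i ∧ B i ≤ hi i
  supp : ∀ i, msupp (ω i) = Set.Icc (A i) (B i)
  mass : ∀ i, ω i Set.univ = ENNReal.ofReal (c i)
  equil : ∀ j, ∃ ℓ : ℝ,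
    (∀ x ∈ Set.Icc (A j) (B j), logPot (ω j) x + ∑ i, logPot (ω i) x = ℓ) ∧
    (∀ x ∈ Set.Icc (lo j) (hi j) \ Set.Icc (A j) (B j),
        ℓ < logPot (ω j) x + ∑ i, logPot (ω i) x)

/-- The vector `(S_1,…,S_d)` of conjugate-symmetric outer functions in `H²(D_{Δ_i})`,
positive at infinity, with boundary moduli `g_i` satisfying
`|S_{i±}|² ∏_{j≠i} S_j = v_i` a.e. on `Δ_i` (outer functions positive at infinity are
recovered from their boundary moduli by `S_i = Ω_{Δ_i}(g_i, ·)`). -/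
def IsSzegoVector (d : ℕ) (A B : Fin d → ℝ) (v : Fin d → ℝ → ℝ)
    (g : Fin d → ℝ → ℝ) (S : Fin d → ℂ → ℂ) : Prop :=
  (∀ i x, 0 ≤ g i x) ∧
  (∀ i, Integrable (fun x => Real.log (g i x)) (arcsineMeasure (A i) (B i))) ∧
  (∀ i, S i = fun z => OmegaFun (A i) (B i) (g i) z) ∧
  (∀ i, ∀ᵐ x ∂(arcsineMeasure (A i) (B i)),
    (g i x) ^ 2 * ∏ j ∈ Finset.univ.erase i, (S j (x : ℂ)).re = v i x)

/-- The operator `ℋ` with component `i` equal to `−(1/2) Σ_{j≠i} H_{[A j, B j]} u_j`. -/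
def calH (d : ℕ) (A B : Fin d → ℝ) (u : Fin d → ℝ → ℝ) (i : Fin d) (x : ℝ) : ℝ :=
  -(1 / 2) * ∑ j ∈ Finset.univ.erase i, harmExt (A j) (B j) (u j) (x : ℂ)

/-- sup norm over `[a,b]`. -/
def supIcc (a b : ℝ) (f : ℝ → ℝ) : ℝ := sSup ((fun x => |f x|) '' Set.Icc a b)

/-- Norm of `C(Δ⃗)`. -/
def vecCNorm (d : ℕ) (A B : Fin d → ℝ) (u : Fin d → ℝ → ℝ) : ℝ :=
  ∑ i, supIcc (A i) (B i) (u i)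

/-- Norm of `C¹(Δ⃗)`. -/
def vecC1Norm (d : ℕ) (A B : Fin d → ℝ) (u : Fin d → ℝ → ℝ) : ℝ :=
  ∑ i, (supIcc (A i) (B i) (u i) +
    supIcc (A i) (B i) (derivWithin (u i) (Set.Icc (A i) (B i))))

/-- membership in `C(Δ⃗)`. -/
def memVecC (d : ℕ) (A B : Fin d → ℝ) (u : Fin d → ℝ → ℝ) : Prop :=
  ∀ i, ContinuousOn (u i) (Set.Icc (A i) (B i))

/-- membership in `C¹(Δ⃗)`. -/
def memVecC1 (d : ℕ) (A B : Fin d → ℝ) (u : Fin d → ℝ → ℝ) : Prop :=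
  ∀ i, ContDiffOn ℝ 1 (u i) (Set.Icc (A i) (B i))

/-- `|w_Δ(x)|` for real `x`. -/
def wAbs (p q x : ℝ) : ℝ := Real.sqrt |(x - p) * (x - q)|

/-- Riemann–Liouville type fractional integral of order 1/2. -/
def fracInt (γ : ℝ) (θ : ℝ → ℝ) (x : ℝ) : ℝ :=
  (Real.sqrt Real.pi)⁻¹ * ∫ t in γ..x, θ t / Real.sqrt |x - t|


/-- The vector of constants `u⃗_{n⃗,∞}`, viewed as a vector of constant functions:
`(u⃗_{n⃗,∞})_i = (H_{Δ_{n⃗,i}} u_i)(∞) = ∫ u_i dω_{Δ_{n⃗,i}}`. -/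
def avgVec (d : ℕ) (An Bn : Fin d → ℝ) (u : Fin d → ℝ → ℝ) : Fin d → ℝ → ℝ :=
  fun i _ => ∫ t, u i t ∂(arcsineMeasure (An i) (Bn i))

/-!
Off `Δ` one has `w_Δ(x) ∫ dω_Δ(t)/(x − t) = 1`, because a Möbius map taking `Δ` to `[-1, 1]` turns
the integrand into the arcsine density; so `H_Δ` reproduces constants. Hence on vectors of
constants `ℋ` acts as the matrix `-½(J − I)`, with `J` the all-ones matrix, whatever the intervals
are, and `I − ℋ` acts as the invertible matrix `½(I + J)`. If `e = (I − ℋ)⁻¹ u_∞`, this makes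
`𝒦 u = u_∞ − e = -ℋ e` a vector of constants, and `(u − 𝒦 u)_∞ = u_∞ − (u_∞ − e) = e`. So
`u ↦ u − ℋ u_∞` undoes `I − 𝒦`, and symmetrically. The inverse subtracts from `u` constants of size
at most `‖u‖_C`, and this does not change derivatives.
-/

section ArcsineLaw

lemma integral_inv_sqrt_one_sub_sq : ∫ x in (-1 : ℝ)..1, (√(1 - x ^ 2))⁻¹ = Real.pi := by
  simpa using (Polynomial.Chebyshev.integral_measureT fun _ => 1).symm.trans
    Polynomial.Chebyshev.integral_measureT_eq_integral_cos

lemma integral_inv_sqrt_one_sub_sq_comp_mul_deriv {a b : ℝ} (hab : a ≤ b) {φ φ' : ℝ → ℝ}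
    (hφ : ContinuousOn φ (Icc a b)) (hφφ' : ∀ t ∈ Ioo a b, HasDerivAt φ (φ' t) t)
    (hφ' : ∀ t ∈ Ioo a b, 0 ≤ φ' t) (ha : φ a = -1) (hb : φ b = 1) :
    ∫ t in a..b, (√(1 - φ t ^ 2))⁻¹ * φ' t = Real.pi := by
  have substitution := intervalIntegral.integral_comp_mul_deriv_of_deriv_nonneg
    (a := a) (b := b) (f := φ) (f' := φ') (g := fun x => (√(1 - x ^ 2))⁻¹)
    (by rwa [uIcc_of_le hab]) (by rwa [min_eq_left hab, max_eq_right hab])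
    (by rwa [min_eq_left hab, max_eq_right hab])
  rwa [ha, hb, integral_inv_sqrt_one_sub_sq] at substitution

lemma restrict_Icc_arcsineMeasure (a b : ℝ) :
    (arcsineMeasure a b).restrict (Icc a b) = arcsineMeasure a b := by
  rw [arcsineMeasure, restrict_withDensity measurableSet_Icc, Measure.restrict_restrict
    measurableSet_Icc, inter_self]

lemma ae_mem_Icc_arcsineMeasure (a b : ℝ) : ∀ᵐ t ∂arcsineMeasure a b, t ∈ Icc a b := by
  rw [← restrict_Icc_arcsineMeasure]
  exact ae_restrict_mem measurableSet_Icc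

lemma integral_arcsineMeasure_congr {E : Type*} [NormedAddCommGroup E] [NormedSpace ℝ E]
    {a b : ℝ} {u v : ℝ → E} (h : EqOn u v (Icc a b)) :
    ∫ t, u t ∂arcsineMeasure a b = ∫ t, v t ∂arcsineMeasure a b :=
  integral_congr_ae <| (ae_mem_Icc_arcsineMeasure a b).mono h

lemma integral_arcsineMeasure {E : Type*} [NormedAddCommGroup E] [NormedSpace ℝ E]
    {a b : ℝ} (hab : a ≤ b) (f : ℝ → E) :
    ∫ t, f t ∂arcsineMeasure a b =
      ∫ t in a..b, (1 / (Real.pi * √((t - a) * (b - t)))) • f t := by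
  rw [arcsineMeasure,
    integral_withDensity_eq_integral_toReal_smul (by fun_prop)
      (.of_forall fun _ => ENNReal.ofReal_lt_top),
    intervalIntegral.integral_of_le hab, ← integral_Icc_eq_integral_Ioc]
  refine integral_congr_ae (.of_forall fun t => ?_)
  simp only [ENNReal.toReal_ofReal (show 0 ≤ 1 / (Real.pi * √((t - a) * (b - t))) by positivity)]

lemma integral_arcsine_density {a b : ℝ} (hab : a < b) :
    ∫ t in a..b, 1 / (Real.pi * √((t - a) * (b - t))) = 1 := by
  have hba : 0 < b - a := sub_pos.2 hab
  let φ : ℝ → ℝ := fun t => (2 * t - a - b) / (b - a)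
  have one_sub_sq (t : ℝ) : 1 - φ t ^ 2 = (2 / (b - a)) ^ 2 * ((t - a) * (b - t)) := by
    simp only [φ]; field_simp; ring
  have density (t : ℝ) :
      1 / (Real.pi * √((t - a) * (b - t))) =
        Real.pi⁻¹ * ((√(1 - φ t ^ 2))⁻¹ * (2 / (b - a))) := by
    rw [one_sub_sq, Real.sqrt_mul (sq_nonneg (2 / (b - a))), Real.sqrt_sq (by positivity)]
    field_simp
  have substitution : ∫ t in a..b, (√(1 - φ t ^ 2))⁻¹ * (2 / (b - a)) = Real.pi := by
    refine integral_inv_sqrt_one_sub_sq_comp_mul_deriv hab.le (by fun_prop) (fun t _ => ?_)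
      (fun t _ => by positivity) ?_ ?_
    · simpa using ((((hasDerivAt_id t).const_mul 2).sub_const a).sub_const b).div_const (b - a)
    all_goals simp only [φ]; field_simp; ring
  simp_rw [density]
  rw [intervalIntegral.integral_const_mul, substitution, inv_mul_cancel₀ Real.pi_ne_zero]

lemma isProbabilityMeasure_arcsineMeasure {a b : ℝ} (hab : a < b) :
    IsProbabilityMeasure (arcsineMeasure a b) := by
  rw [isProbabilityMeasure_iff_real]
  simpa using (integral_arcsineMeasure hab.le fun _ => (1 : ℝ)).trans
    (by simpa using integral_arcsine_density hab)

lemma integrable_arcsineMeasure_of_continuousOn {a b : ℝ} (hab : a < b) {u : ℝ → ℝ}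
    (hu : ContinuousOn u (Icc a b)) : Integrable u (arcsineMeasure a b) := by
  have := isProbabilityMeasure_arcsineMeasure hab
  rw [← restrict_Icc_arcsineMeasure]
  exact hu.integrableOn_of_subset_isCompact isCompact_Icc measurableSet_Icc subset_rfl
    (measure_ne_top _ _)

lemma sub_mul_sub_pos_of_notMem_Icc {a b x : ℝ} (hab : a ≤ b) (hx : x ∉ Icc a b) :
    0 < (x - a) * (x - b) := by
  rcases not_and_or.1 hx with h | h
  · exact mul_pos_of_neg_of_neg (by linarith) (by linarith)
  · exact mul_pos (by linarith) (by linarith)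

/-- The Möbius map with pole `x` that takes `a` to `-1` and `b` to `1`, evaluated at `t`. It carries
the probability density `w_Δ(x) dω_Δ(t)/(x − t)` on `Δ = [a, b]` to the arcsine density. -/
def moebiusIcc (a b x t : ℝ) : ℝ :=
  (2 * ((x - a) * (x - b)) / (x - t) - (2 * x - a - b)) / (b - a)

lemma one_sub_moebiusIcc_sq {a b x t : ℝ} (hab : a ≠ b) (hxt : x ≠ t) :
    1 - moebiusIcc a b x t ^ 2 =
      (2 / ((b - a) * |x - t|)) ^ 2 * ((x - a) * (x - b)) * ((t - a) * (b - t)) := by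
  have hba : b - a ≠ 0 := sub_ne_zero.2 hab.symm
  have hxt' : x - t ≠ 0 := sub_ne_zero.2 hxt
  rw [div_pow 2, mul_pow (b - a), sq_abs, moebiusIcc]
  field_simp
  ring

lemma hasDerivAt_moebiusIcc (a b : ℝ) {x t : ℝ} (hxt : x ≠ t) :
    HasDerivAt (moebiusIcc a b x) (2 * ((x - a) * (x - b)) / (x - t) ^ 2 / (b - a)) t := by
  have hdiv := (hasDerivAt_const t (2 * ((x - a) * (x - b)))).fun_div
    ((hasDerivAt_id' t).const_sub x) (sub_ne_zero.2 hxt)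
  exact ((hdiv.sub_const (2 * x - a - b)).div_const (b - a)).congr_deriv (by simp)

lemma moebiusIcc_left {a b x : ℝ} (hab : a ≠ b) (hx : x ≠ a) : moebiusIcc a b x a = -1 := by
  have hba : b - a ≠ 0 := sub_ne_zero.2 hab.symm
  have hxa : x - a ≠ 0 := sub_ne_zero.2 hx
  rw [moebiusIcc]
  field_simp
  ring

lemma moebiusIcc_right {a b x : ℝ} (hab : a ≠ b) (hx : x ≠ b) : moebiusIcc a b x b = 1 := by
  have hba : b - a ≠ 0 := sub_ne_zero.2 hab.symm
  have hxb : x - b ≠ 0 := sub_ne_zero.2 hx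
  rw [moebiusIcc]
  field_simp
  ring

lemma integral_arcsine_density_mul_wAbs_div {a b x : ℝ} (hab : a < b) (hx : x ∉ Icc a b) :
    ∫ t in a..b, 1 / (Real.pi * √((t - a) * (b - t))) * (wAbs a b x / |x - t|) = 1 := by
  have hba : 0 < b - a := sub_pos.2 hab
  have hD : 0 < (x - a) * (x - b) := sub_mul_sub_pos_of_notMem_Icc hab.le hx
  have hxt {t : ℝ} (ht : t ∈ Icc a b) : x ≠ t := (ne_of_mem_of_not_mem ht hx).symm
  let φ' : ℝ → ℝ := fun t => 2 * ((x - a) * (x - b)) / (x - t) ^ 2 / (b - a)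
  have integrand (t : ℝ) (ht : t ∈ Icc a b) :
      1 / (Real.pi * √((t - a) * (b - t))) * (wAbs a b x / |x - t|) =
        Real.pi⁻¹ * ((√(1 - moebiusIcc a b x t ^ 2))⁻¹ * φ' t) := by
    have hxt_pos : 0 < |x - t| := abs_pos.2 (sub_ne_zero.2 (hxt ht))
    have hφ' : φ' t = 2 * √((x - a) * (x - b)) ^ 2 / |x - t| ^ 2 / (b - a) := by
      rw [Real.sq_sqrt hD.le, sq_abs]
    rw [one_sub_moebiusIcc_sq hab.ne (hxt ht), hφ', wAbs, abs_of_pos hD,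
      Real.sqrt_mul (mul_nonneg (sq_nonneg (2 / ((b - a) * |x - t|))) hD.le),
      Real.sqrt_mul (sq_nonneg (2 / ((b - a) * |x - t|))), Real.sqrt_sq (by positivity)]
    field_simp
  have hφφ' (t : ℝ) (ht : t ∈ Icc a b) : HasDerivAt (moebiusIcc a b x) (φ' t) t :=
    hasDerivAt_moebiusIcc a b (hxt ht)
  have substitution : ∫ t in a..b, (√(1 - moebiusIcc a b x t ^ 2))⁻¹ * φ' t = Real.pi :=
    integral_inv_sqrt_one_sub_sq_comp_mul_deriv hab.le
      (fun t ht => (hφφ' t ht).continuousAt.continuousWithinAt)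
      (fun t ht => hφφ' t (Ioo_subset_Icc_self ht)) (fun t _ => by positivity)
      (moebiusIcc_left hab.ne (hxt (left_mem_Icc.2 hab.le)))
      (moebiusIcc_right hab.ne (hxt (right_mem_Icc.2 hab.le)))
  rw [intervalIntegral.integral_congr (uIcc_of_le hab.le ▸ integrand),
    intervalIntegral.integral_const_mul, substitution, inv_mul_cancel₀ Real.pi_ne_zero]

end ArcsineLaw

section HarmonicExtension

lemma wBranch_ofReal {a b x : ℝ} (hab : a ≤ b) (hx : x ∉ Icc a b) :
    wBranch a b x = ((x - a) * √((x - b) / (x - a)) : ℝ) := by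
  have hr : 0 < (x - b) / (x - a) := by
    have hD := sub_mul_sub_pos_of_notMem_Icc hab hx
    rcases pos_and_pos_or_neg_and_neg_of_mul_pos hD with ⟨ha, hb⟩ | ⟨ha, hb⟩
    · exact div_pos hb ha
    · exact div_pos_of_neg_of_neg hb ha
  rw [wBranch, Real.sqrt_eq_rpow, Real.rpow_def_of_pos hr]
  push_cast [Complex.ofReal_log hr.le]
  rw [mul_comm (1 / 2 : ℂ)]

lemma wBranch_div_sub {a b x t : ℝ} (hx : x ∉ Icc a b) (ht : t ∈ Icc a b) :
    wBranch a b x / (x - t) = (wAbs a b x / |x - t| : ℝ) := by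
  have hab : a ≤ b := ht.1.trans ht.2
  have hD := sub_mul_sub_pos_of_notMem_Icc hab hx
  have hxa : x - a ≠ 0 := left_ne_zero_of_mul hD.ne'
  have hw : wAbs a b x = |x - a| * √((x - b) / (x - a)) := by
    rw [wAbs, abs_of_pos hD, ← Real.sqrt_sq_eq_abs, ← Real.sqrt_mul (sq_nonneg _)]
    congr 1; field_simp
  rw [wBranch_ofReal hab hx, hw]
  norm_cast
  rcases not_and_or.1 hx with h | h
  · rw [abs_of_neg (by linarith), abs_of_neg (by linarith [ht.1])]
    rw [neg_mul, neg_div_neg_eq]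
  · rw [abs_of_pos (by linarith), abs_of_pos (by linarith [ht.2])]

lemma harmExt_congr {a b : ℝ} {u v : ℝ → ℝ} (h : EqOn u v (Icc a b)) (z : ℂ) :
    harmExt a b u z = harmExt a b v z := by
  unfold harmExt cauchyT
  congr 2
  exact integral_arcsineMeasure_congr fun t ht => by simp only [h ht]

lemma harmExt_ofReal {a b x : ℝ} (hx : x ∉ Icc a b) (u : ℝ → ℝ) :
    harmExt a b u x = ∫ t, wAbs a b x / |x - t| * u t ∂arcsineMeasure a b := by
  rw [harmExt, cauchyT, ← integral_const_mul, ← Complex.ofReal_re (∫ t, _ ∂_),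
    ← integral_complex_ofReal]
  congr 1
  refine integral_arcsineMeasure_congr fun t ht => ?_
  rw [Complex.ofReal_mul, ← wBranch_div_sub hx ht]
  ring

lemma harmExt_const {a b x : ℝ} (hab : a < b) (hx : x ∉ Icc a b) (c : ℝ) :
    harmExt a b (fun _ => c) x = c := by
  rw [harmExt_ofReal hx, integral_mul_const, integral_arcsineMeasure hab.le]
  simp only [smul_eq_mul]
  rw [integral_arcsine_density_mul_wAbs_div hab hx, one_mul]

end HarmonicExtension

section Constants

variable {d : ℕ}

/-- The matrix `-½(J − I)`, with `J` the all-ones matrix, applied to `c`: the action of `ℋ` on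
vectors of constants. -/
def constH (d : ℕ) (c : Fin d → ℝ) (i : Fin d) : ℝ :=
  -(1 / 2) * ∑ j ∈ Finset.univ.erase i, c j

lemma calH_congr {A B : Fin d → ℝ} {u v : Fin d → ℝ → ℝ}
    (h : ∀ i, EqOn (u i) (v i) (Icc (A i) (B i))) : calH d A B u = calH d A B v := by
  funext i x
  exact congrArg _ <| Finset.sum_congr rfl fun j _ => harmExt_congr (h j) _

lemma calH_const {A B : Fin d → ℝ} (hAB : ∀ i, A i < B i) {i : Fin d} {x : ℝ}
    (hx : ∀ j, j ≠ i → x ∉ Icc (A j) (B j)) (c : Fin d → ℝ) :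
    calH d A B (fun j _ => c j) i x = constH d c i :=
  congrArg _ <| Finset.sum_congr rfl fun j hj =>
    harmExt_const (hAB j) (hx j (Finset.ne_of_mem_erase hj)) _

lemma surjective_sub_constH : Function.Surjective fun e : Fin d → ℝ => e - constH d e := by
  intro c
  -- `½(I + J)` has inverse `2(I − J/(d + 1))`.
  refine ⟨fun i => 2 * (c i - (∑ j, c j) / (d + 1)), funext fun i => ?_⟩
  have hd : (d : ℝ) + 1 ≠ 0 := by positivity
  simp only [Pi.sub_apply, constH, Finset.sum_erase_eq_sub (Finset.mem_univ i), ← Finset.mul_sum,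
    Finset.sum_sub_distrib, Finset.sum_const, Finset.card_univ, Fintype.card_fin, nsmul_eq_mul]
  field_simp
  ring

lemma abs_constH_le (c : Fin d → ℝ) (i : Fin d) : |constH d c i| ≤ ∑ j, |c j| := calc
  |constH d c i| = 1 / 2 * |∑ j ∈ Finset.univ.erase i, c j| := by
    rw [constH, abs_mul, abs_neg, abs_of_pos one_half_pos]
  _ ≤ |∑ j ∈ Finset.univ.erase i, c j| := by linarith [abs_nonneg (∑ j ∈ Finset.univ.erase i, c j)]
  _ ≤ ∑ j ∈ Finset.univ.erase i, |c j| := Finset.abs_sum_le_sum_abs _ _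
  _ ≤ ∑ j, |c j| :=
    Finset.sum_le_sum_of_subset_of_nonneg (Finset.erase_subset _ _) fun _ _ _ => abs_nonneg _

lemma sum_abs_constH_le (c : Fin d → ℝ) : ∑ i, |constH d c i| ≤ d * ∑ j, |c j| := by
  simpa using Finset.sum_le_card_nsmul Finset.univ _ _ fun i _ => abs_constH_le c i

/-- The vector `u_∞` as an element of `ℝ^d`, while `avgVec` views it as a vector of constant
functions. -/
def arcsineMean (d : ℕ) (A B : Fin d → ℝ) (u : Fin d → ℝ → ℝ) (i : Fin d) : ℝ :=
  ∫ t, u i t ∂arcsineMeasure (A i) (B i)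

lemma arcsineMean_congr {A B : Fin d → ℝ} {u v : Fin d → ℝ → ℝ}
    (h : ∀ i, EqOn (u i) (v i) (Icc (A i) (B i))) : arcsineMean d A B u = arcsineMean d A B v :=
  funext fun i => integral_arcsineMeasure_congr (h i)

lemma arcsineMean_sub_const {A B : Fin d → ℝ} (hAB : ∀ i, A i < B i) {u : Fin d → ℝ → ℝ}
    (hu : memVecC d A B u) (k : Fin d → ℝ) :
    arcsineMean d A B (fun i x => u i x - k i) = arcsineMean d A B u - k := by
  funext i
  have := isProbabilityMeasure_arcsineMeasure (hAB i)
  simp [arcsineMean, integral_sub (integrable_arcsineMeasure_of_continuousOn (hAB i) (hu i))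
    (integrable_const (k i))]

end Constants

section Inverse

/-- The operator `𝒦 u = (I − (I − ℋ)⁻¹) u_∞`, with `R` in the role of `(I − ℋ)⁻¹`. -/
def calK (d : ℕ) (A B : Fin d → ℝ) (R : (Fin d → ℝ → ℝ) → Fin d → ℝ → ℝ)
    (u : Fin d → ℝ → ℝ) (i : Fin d) (x : ℝ) : ℝ :=
  avgVec d A B u i x - R (avgVec d A B u) i x

/-- The operator `u ↦ u − ℋ u_∞`, the candidate for `(I − 𝒦)⁻¹`. -/
def calKInv (d : ℕ) (A B : Fin d → ℝ) (u : Fin d → ℝ → ℝ) (i : Fin d) (x : ℝ) : ℝ :=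
  u i x - calH d A B (avgVec d A B u) i x

/-- `R` inverts `I − ℋ_{Δ',Δ}` from the left on `C(Δ)`, where `Δ_i = [A i, B i]` and
`Δ'_i = [A' i, B' i]`. As elements of `C(Δ)` are encoded by functions on `ℝ`, the identity is only
required on `Δ`. -/
def IsLeftResolvent (d : ℕ) (A B A' B' : Fin d → ℝ) (R : (Fin d → ℝ → ℝ) → Fin d → ℝ → ℝ) :
    Prop :=
  ∀ w, memVecC d A B w → ∀ i, ∀ x ∈ Icc (A i) (B i),
    R (fun j y => w j y - calH d A' B' w j y) i x = w i x

variable {d : ℕ} {A B A' B' : Fin d → ℝ} {R : (Fin d → ℝ → ℝ) → Fin d → ℝ → ℝ}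
  {u : Fin d → ℝ → ℝ}

lemma memVecC.mono (hu : memVecC d A B u) (hsub : ∀ i, Icc (A' i) (B' i) ⊆ Icc (A i) (B i)) :
    memVecC d A' B' u :=
  fun i => (hu i).mono (hsub i)

lemma IsLeftResolvent.apply_eq (hR : IsLeftResolvent d A B A' B' R)
    (hsub : ∀ i, Icc (A' i) (B' i) ⊆ Icc (A i) (B i)) {f : Fin d → ℝ → ℝ} (hu : memVecC d A B u)
    (hf : ∀ i, ∀ x ∈ Icc (A i) (B i), u i x - calH d A' B' u i x = f i x)
    {i : Fin d} {x : ℝ} (hx : x ∈ Icc (A i) (B i)) : R f i x = u i x := by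
  classical
  -- `ℋ` does not see `u` off `Δ`, so there `u` can be redefined to solve `u − ℋ u = f` on all of
  -- `ℝ`: the values of `f` off `Δ` could a priori affect `R f`.
  let w : Fin d → ℝ → ℝ := fun j =>
    (Icc (A j) (B j)).piecewise (u j) fun y => f j y + calH d A' B' u j y
  have hwu (j : Fin d) : EqOn (w j) (u j) (Icc (A j) (B j)) := piecewise_eqOn _ _ _
  have hw : memVecC d A B w := fun j => (hu j).congr (hwu j)
  have hfw : (fun j y => w j y - calH d A' B' w j y) = f := by
    rw [calH_congr fun j => (hwu j).mono (hsub j)]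
    funext j y
    by_cases hy : y ∈ Icc (A j) (B j)
    · rw [hwu j hy, hf j y hy]
    · simp only [w, piecewise_eq_of_notMem _ _ _ hy, add_sub_cancel_right]
  rw [← hfw, hR w hw i x hx, hwu i hx]

variable (hdisj : ∀ i j, i ≠ j → Disjoint (Icc (A i) (B i)) (Icc (A j) (B j)))
  (hA'B' : ∀ i, A' i < B' i) (hsub : ∀ i, Icc (A' i) (B' i) ⊆ Icc (A i) (B i))
include hdisj hA'B' hsub

lemma calH_const_of_mem (c : Fin d → ℝ) {i : Fin d} {x : ℝ} (hx : x ∈ Icc (A i) (B i)) :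
    calH d A' B' (fun j _ => c j) i x = constH d c i :=
  calH_const hA'B' (fun j hj hxj => disjoint_left.1 (hdisj j i hj) (hsub j hxj) hx) c

lemma calKInv_apply_of_mem (u : Fin d → ℝ → ℝ) {i : Fin d} {x : ℝ} (hx : x ∈ Icc (A i) (B i)) :
    calKInv d A' B' u i x = u i x - constH d (arcsineMean d A' B' u) i :=
  congrArg _ <| calH_const_of_mem hdisj hA'B' hsub _ hx

lemma calK_apply_of_mem (hR : IsLeftResolvent d A B A' B' R) {e : Fin d → ℝ}
    (he : e - constH d e = arcsineMean d A' B' u) {i : Fin d} {x : ℝ} (hx : x ∈ Icc (A i) (B i)) :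
    calK d A' B' R u i x = -constH d e i := by
  have hRe : R (avgVec d A' B' u) i x = e i :=
    hR.apply_eq hsub (u := fun j _ => e j) (fun _ => continuousOn_const)
      (fun j y hy => by
        rw [calH_const_of_mem hdisj hA'B' hsub e hy]
        exact congrFun he j) hx
  have hei : e i - constH d e i = avgVec d A' B' u i x := congrFun he i
  rw [calK, hRe, ← hei]
  ring

theorem calKInv_sub_calK_calKInv (hR : IsLeftResolvent d A B A' B' R) (hu : memVecC d A B u)
    {i : Fin d} {x : ℝ} (hx : x ∈ Icc (A i) (B i)) :
    calKInv d A' B' u i x - calK d A' B' R (calKInv d A' B' u) i x = u i x := by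
  have hmean : arcsineMean d A' B' (calKInv d A' B' u) =
      arcsineMean d A' B' u - constH d (arcsineMean d A' B' u) := by
    rw [← arcsineMean_sub_const hA'B' (hu.mono hsub)]
    exact arcsineMean_congr fun j y hy => calKInv_apply_of_mem hdisj hA'B' hsub u (hsub j hy)
  rw [calK_apply_of_mem hdisj hA'B' hsub hR hmean.symm hx,
    calKInv_apply_of_mem hdisj hA'B' hsub u hx]
  ring

theorem calKInv_sub_calK (hR : IsLeftResolvent d A B A' B' R) (hu : memVecC d A B u)
    {i : Fin d} {x : ℝ} (hx : x ∈ Icc (A i) (B i)) :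
    calKInv d A' B' (fun j y => u j y - calK d A' B' R u j y) i x = u i x := by
  obtain ⟨e, he : e - constH d e = arcsineMean d A' B' u⟩ :=
    surjective_sub_constH (arcsineMean d A' B' u)
  have hK {j : Fin d} {y : ℝ} (hy : y ∈ Icc (A j) (B j)) : calK d A' B' R u j y = -constH d e j :=
    calK_apply_of_mem hdisj hA'B' hsub hR he hy
  have hmean : arcsineMean d A' B' (fun j y => u j y - calK d A' B' R u j y) = e := calc
    _ = arcsineMean d A' B' fun j y => u j y - (-constH d e) j :=
      arcsineMean_congr fun j y hy => by simp only [hK (hsub j hy), Pi.neg_apply]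
    _ = arcsineMean d A' B' u - -constH d e := arcsineMean_sub_const hA'B' (hu.mono hsub) _
    _ = e := by rw [sub_neg_eq_add, ← he, sub_add_cancel]
  rw [calKInv_apply_of_mem hdisj hA'B' hsub _ hx, hmean, hK hx]
  ring

theorem eqOn_of_sub_calK_eqOn (hR : IsLeftResolvent d A B A' B' R) {u v : Fin d → ℝ → ℝ}
    (hu : memVecC d A B u) (hv : memVecC d A B v)
    (h : ∀ i, ∀ x ∈ Icc (A i) (B i),
      u i x - calK d A' B' R u i x = v i x - calK d A' B' R v i x) (i : Fin d) :
    EqOn (u i) (v i) (Icc (A i) (B i)) := by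
  intro x hx
  have hmean := arcsineMean_congr fun j y (hy : y ∈ Icc (A' j) (B' j)) => h j y (hsub j hy)
  rw [← calKInv_sub_calK hdisj hA'B' hsub hR hu hx, ← calKInv_sub_calK hdisj hA'B' hsub hR hv hx,
    calKInv_apply_of_mem hdisj hA'B' hsub _ hx, calKInv_apply_of_mem hdisj hA'B' hsub _ hx, hmean,
    h i x hx]

end Inverse

section Norms

lemma supIcc_nonneg (a b : ℝ) (u : ℝ → ℝ) : 0 ≤ supIcc a b u := by
  apply Real.sSup_nonneg
  rintro _ ⟨x, _, rfl⟩
  exact abs_nonneg _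

lemma supIcc_congr {a b : ℝ} {u v : ℝ → ℝ} (h : EqOn u v (Icc a b)) :
    supIcc a b u = supIcc a b v :=
  congrArg sSup <| image_congr fun _ hx => by rw [h hx]

lemma abs_le_supIcc {a b x : ℝ} {u : ℝ → ℝ} (hu : ContinuousOn u (Icc a b)) (hx : x ∈ Icc a b) :
    |u x| ≤ supIcc a b u :=
  le_csSup (isCompact_Icc.image_of_continuousOn hu.abs).bddAbove ⟨x, hx, rfl⟩

lemma supIcc_sub_const_le {a b : ℝ} {u : ℝ → ℝ} (hu : ContinuousOn u (Icc a b)) (k : ℝ) :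
    supIcc a b (fun x => u x - k) ≤ supIcc a b u + |k| := by
  refine Real.sSup_le ?_ (add_nonneg (supIcc_nonneg a b u) (abs_nonneg k))
  rintro _ ⟨x, hx, rfl⟩
  exact (abs_sub _ _).trans (by gcongr; exact abs_le_supIcc hu hx)

lemma abs_integral_arcsineMeasure_le_supIcc {a b a' b' : ℝ} (hab' : a' < b')
    (hsub : Icc a' b' ⊆ Icc a b) {u : ℝ → ℝ} (hu : ContinuousOn u (Icc a b)) :
    |∫ t, u t ∂arcsineMeasure a' b'| ≤ supIcc a b u := by
  have := isProbabilityMeasure_arcsineMeasure hab'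
  have hu_le : ∀ᵐ t ∂arcsineMeasure a' b', ‖u t‖ ≤ supIcc a b u :=
    (ae_mem_Icc_arcsineMeasure a' b').mono fun t ht => abs_le_supIcc hu (hsub ht)
  simpa using norm_integral_le_of_norm_le_const hu_le

variable {d : ℕ} {A B A' B' : Fin d → ℝ} {u v : Fin d → ℝ → ℝ}

lemma vecCNorm_nonneg (d : ℕ) (A B : Fin d → ℝ) (u : Fin d → ℝ → ℝ) : 0 ≤ vecCNorm d A B u :=
  Finset.sum_nonneg fun _ _ => supIcc_nonneg _ _ _

lemma vecCNorm_congr (h : ∀ i, EqOn (u i) (v i) (Icc (A i) (B i))) :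
    vecCNorm d A B u = vecCNorm d A B v :=
  Finset.sum_congr rfl fun i _ => supIcc_congr (h i)

lemma vecCNorm_sub_const_le (hu : memVecC d A B u) (k : Fin d → ℝ) :
    vecCNorm d A B (fun i x => u i x - k i) ≤ vecCNorm d A B u + ∑ i, |k i| :=
  (Finset.sum_le_sum fun i _ => supIcc_sub_const_le (hu i) (k i)).trans_eq Finset.sum_add_distrib

lemma vecC1Norm_eq_add (d : ℕ) (A B : Fin d → ℝ) (u : Fin d → ℝ → ℝ) :
    vecC1Norm d A B u =
      vecCNorm d A B u + vecCNorm d A B fun i => derivWithin (u i) (Icc (A i) (B i)) :=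
  Finset.sum_add_distrib

lemma memVecC1.memVecC (hu : memVecC1 d A B u) : memVecC d A B u := fun i => (hu i).continuousOn

lemma sum_abs_arcsineMean_le (hA'B' : ∀ i, A' i < B' i)
    (hsub : ∀ i, Icc (A' i) (B' i) ⊆ Icc (A i) (B i)) (hu : memVecC d A B u) :
    ∑ i, |arcsineMean d A' B' u i| ≤ vecCNorm d A B u :=
  Finset.sum_le_sum fun i _ => abs_integral_arcsineMeasure_le_supIcc (hA'B' i) (hsub i) (hu i)

variable (hdisj : ∀ i j, i ≠ j → Disjoint (Icc (A i) (B i)) (Icc (A j) (B j)))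
  (hA'B' : ∀ i, A' i < B' i) (hsub : ∀ i, Icc (A' i) (B' i) ⊆ Icc (A i) (B i))
include hdisj hA'B' hsub

theorem vecCNorm_calKInv_le (hu : memVecC d A B u) :
    vecCNorm d A B (calKInv d A' B' u) ≤ (1 + d) * vecCNorm d A B u := calc
  _ = vecCNorm d A B fun i x => u i x - constH d (arcsineMean d A' B' u) i :=
    vecCNorm_congr fun i _ hx => calKInv_apply_of_mem hdisj hA'B' hsub u hx
  _ ≤ vecCNorm d A B u + ∑ i, |constH d (arcsineMean d A' B' u) i| := vecCNorm_sub_const_le hu _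
  _ ≤ vecCNorm d A B u + d * ∑ i, |arcsineMean d A' B' u i| := by
    gcongr; exact sum_abs_constH_le _
  _ ≤ vecCNorm d A B u + d * vecCNorm d A B u := by
    gcongr; exact sum_abs_arcsineMean_le hA'B' hsub hu
  _ = (1 + d) * vecCNorm d A B u := by ring

lemma eqOn_derivWithin_calKInv (u : Fin d → ℝ → ℝ) (i : Fin d) :
    EqOn (derivWithin (calKInv d A' B' u i) (Icc (A i) (B i)))
      (derivWithin (u i) (Icc (A i) (B i))) (Icc (A i) (B i)) := by
  have h : EqOn (calKInv d A' B' u i) (fun x => u i x - constH d (arcsineMean d A' B' u) i)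
      (Icc (A i) (B i)) := fun x hx => calKInv_apply_of_mem hdisj hA'B' hsub u hx
  intro x hx
  rw [derivWithin_congr h (h hx), derivWithin_sub_const_fun]

theorem vecC1Norm_calKInv_le (hu : memVecC1 d A B u) :
    vecC1Norm d A B (calKInv d A' B' u) ≤ (1 + d) * vecC1Norm d A B u := by
  have hC := vecCNorm_calKInv_le hdisj hA'B' hsub hu.memVecC
  have hderiv := vecCNorm_congr (eqOn_derivWithin_calKInv hdisj hA'B' hsub u)
  have hderiv_nonneg : 0 ≤ vecCNorm d A B fun i => derivWithin (u i) (Icc (A i) (B i)) :=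
    vecCNorm_nonneg _ _ _ _
  rw [vecC1Norm_eq_add, vecC1Norm_eq_add d A B u, hderiv, mul_add]
  exact add_le_add hC (le_mul_of_one_le_left hderiv_nonneg (by simp))

end Norms

theorem K_operator_invertible_uniformly_bounded_general {ι : Type*} {d : ℕ} {A B : Fin d → ℝ}
    (hdisj : ∀ i j, i ≠ j → Disjoint (Icc (A i) (B i)) (Icc (A j) (B j)))
    {An Bn : ι → Fin d → ℝ} (hABn : ∀ n i, An n i < Bn n i)
    (hsubn : ∀ n i, Icc (An n i) (Bn n i) ⊆ Icc (A i) (B i))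
    {R : ι → (Fin d → ℝ → ℝ) → Fin d → ℝ → ℝ}
    (hR : ∀ n, IsLeftResolvent d A B (An n) (Bn n) (R n)) :
    (∀ n u, memVecC d A B u → ∀ i, ∀ x ∈ Icc (A i) (B i),
      calKInv d (An n) (Bn n) u i x -
        calK d (An n) (Bn n) (R n) (calKInv d (An n) (Bn n) u) i x = u i x) ∧
    (∀ n u u', memVecC d A B u → memVecC d A B u' →
      (∀ i, ∀ x ∈ Icc (A i) (B i),
        u i x - calK d (An n) (Bn n) (R n) u i x =
          u' i x - calK d (An n) (Bn n) (R n) u' i x) →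
      ∀ i, ∀ x ∈ Icc (A i) (B i), u i x = u' i x) ∧
    (∀ n u,
      (memVecC d A B u →
        vecCNorm d A B (calKInv d (An n) (Bn n) u) ≤ (1 + d) * vecCNorm d A B u) ∧
      (memVecC1 d A B u →
        vecC1Norm d A B (calKInv d (An n) (Bn n) u) ≤ (1 + d) * vecC1Norm d A B u)) :=
  ⟨fun n _ hu _ _ hx => calKInv_sub_calK_calKInv hdisj (hABn n) (hsubn n) (hR n) hu hx,
    fun n _ _ hu hu' h i _ hx =>
      eqOn_of_sub_calK_eqOn hdisj (hABn n) (hsubn n) (hR n) hu hu' h i hx,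
    fun n _ => ⟨vecCNorm_calKInv_le hdisj (hABn n) (hsubn n),
      vecC1Norm_calKInv_le hdisj (hABn n) (hsubn n)⟩⟩

/-- Lemma 3.20: with `𝒦_{n⃗} u⃗ = (I − (I−ℋ_{n⃗})⁻¹) u⃗_{n⃗,∞}`, the operator
`I − 𝒦_{n⃗}` is invertible with explicit inverse `(I − 𝒦_{n⃗})⁻¹ u⃗ = u⃗ − ℋ_{n⃗} u⃗_{n⃗,∞}`,
uniformly bounded in `n⃗` on `C(Δ⃗)` and `C¹(Δ⃗)`. -/
theorem K_operator_invertible_uniformly_bounded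
    (d : ℕ) (A B : Fin d → ℝ) (hAB : ∀ i, A i < B i)
    (hdisj : ∀ i j, i ≠ j → Disjoint (Set.Icc (A i) (B i)) (Set.Icc (A j) (B j)))
    -- subintervals `Δ_{n⃗,i} ⊆ Δ_i`
    (An Bn : ℕ → Fin d → ℝ)
    (hABn : ∀ n i, An n i < Bn n i)
    (hsubn : ∀ n i, Set.Icc (An n i) (Bn n i) ⊆ Set.Icc (A i) (B i))
    -- `R n = (I − ℋ_{n⃗})⁻¹`, the (two-sided) inverse of `I − ℋ_{Δ⃗_{n⃗},Δ⃗}` on `C(Δ⃗)`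
    (R : ℕ → (Fin d → ℝ → ℝ) → (Fin d → ℝ → ℝ))
    (hRmem : ∀ n w, memVecC d A B w → memVecC d A B (R n w))
    (hRright : ∀ n w, memVecC d A B w → ∀ i, ∀ x ∈ Set.Icc (A i) (B i),
      R n w i x - calH d (An n) (Bn n) (R n w) i x = w i x)
    (hRleft : ∀ n w, memVecC d A B w → ∀ i, ∀ x ∈ Set.Icc (A i) (B i),
      R n (fun j y => w j y - calH d (An n) (Bn n) w j y) i x = w i x) :
    -- `(I − 𝒦_{n⃗})` maps `u⃗ − ℋ_{n⃗} u⃗_{n⃗,∞}` back to `u⃗` (surjectivity with explicit inverse)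
    (∀ n u, memVecC d A B u →
      ∀ i, ∀ x ∈ Set.Icc (A i) (B i),
        (fun j y => u j y - calH d (An n) (Bn n) (avgVec d (An n) (Bn n) u) j y) i x -
          (avgVec d (An n) (Bn n)
              (fun j y => u j y - calH d (An n) (Bn n) (avgVec d (An n) (Bn n) u) j y) i x -
            R n (avgVec d (An n) (Bn n)
              (fun j y => u j y - calH d (An n) (Bn n) (avgVec d (An n) (Bn n) u) j y)) i x) =
          u i x) ∧
    -- injectivity of `I − 𝒦_{n⃗}` on `C(Δ⃗)`
    (∀ n u u', memVecC d A B u → memVecC d A B u' →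
      (∀ i, ∀ x ∈ Set.Icc (A i) (B i),
        u i x - (avgVec d (An n) (Bn n) u i x - R n (avgVec d (An n) (Bn n) u) i x) =
          u' i x - (avgVec d (An n) (Bn n) u' i x - R n (avgVec d (An n) (Bn n) u') i x)) →
      ∀ i, ∀ x ∈ Set.Icc (A i) (B i), u i x = u' i x) ∧
    -- uniform bound `‖(I − 𝒦_{n⃗})⁻¹‖ ≤ C` on `C(Δ⃗)` and on `C¹(Δ⃗)`
    (∃ C : ℝ, ∀ n u,
      (memVecC d A B u →
        vecCNorm d A B
          (fun i x => u i x - calH d (An n) (Bn n) (avgVec d (An n) (Bn n) u) i x) ≤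
          C * vecCNorm d A B u) ∧
      (memVecC1 d A B u →
        vecC1Norm d A B
          (fun i x => u i x - calH d (An n) (Bn n) (avgVec d (An n) (Bn n) u) i x) ≤
          C * vecC1Norm d A B u)) := by
  obtain ⟨hsurj, hinj, hbound⟩ :=
    K_operator_invertible_uniformly_bounded_general hdisj hABn hsubn hRleft
  exact ⟨hsurj, hinj, 1 + d, hbound⟩

end
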